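/- Let μ be the nonautonomous Bernoulli measure on Σ_0^∞(m) generated by positive probability vectors p_j, and suppose lim_{n→∞} m_n/n^{1-α} < 1 for some α > 0. Then for μ-almost every ω, the lower local entropy h̲_μ(σ,ω) equals liminf_{n→∞} (1/n) ∑_{j=0}^{n-1} H(p_j) and the upper local entropy h̄_μ(σ,ω) equals limsup_{n→∞} (1/n) ∑_{j=0}^{n-1} H(p_j), where H(p_j) = -∑_{i=1}^{m_j} p_{j,i} log p_{j,i}. -/

import Mathlib

open MeasureTheory Filter Topology

/-- Real `liminf`s of asymptotically equal sequences agree, even when unbounded. -/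
lemma liminf_eq_of_tendsto_sub {f g : ℕ → ℝ} (h : Tendsto (fun n => f n - g n) atTop (𝓝 0)) :
    liminf f atTop = liminf g atTop := by
  have key : ∀ {f g : ℕ → ℝ}, Tendsto (fun n => f n - g n) atTop (𝓝 0) →
      ∀ a ∈ {a | ∀ᶠ n in atTop, a ≤ f n}, ∀ ε > 0, a - ε ∈ {a | ∀ᶠ n in atTop, a ≤ g n} := by
    intro f g h a ha ε hε
    filter_upwards [ha, h.eventually (gt_mem_nhds hε)] with n h1 h2
    linarith
  have h' : Tendsto (fun n => g n - f n) atTop (𝓝 0) := by simpa using h.neg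
  rw [liminf_eq, liminf_eq]
  set S := {a | ∀ᶠ n in atTop, a ≤ f n}
  set T := {a | ∀ᶠ n in atTop, a ≤ g n}
  have hST := key h
  have hTS := key h'
  have bdd : ∀ {S T : Set ℝ}, (∀ a ∈ S, ∀ ε > 0, a - ε ∈ T) → BddAbove T → BddAbove S := by
    rintro S T hST ⟨b, hb⟩
    exact ⟨b + 1, fun a ha => by linarith [hb (hST a ha 1 one_pos)]⟩
  have le : ∀ {S T : Set ℝ}, (∀ a ∈ S, ∀ ε > 0, a - ε ∈ T) → BddAbove T → S.Nonempty →
      sSup S ≤ sSup T := by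
    intro S T hST hT hS
    refine csSup_le hS fun a ha => le_of_forall_pos_le_add fun ε hε => ?_
    linarith [le_csSup hT (hST a ha ε hε)]
  by_cases hS : S.Nonempty
  · have hT : T.Nonempty := ⟨_, hST _ hS.some_mem 1 one_pos⟩
    by_cases hb : BddAbove T
    · exact le_antisymm (le hST hb hS) (le hTS (bdd hST hb) hT)
    · rw [Real.sSup_of_not_bddAbove hb, Real.sSup_of_not_bddAbove fun h => hb (bdd hTS h)]
  · have hT : ¬ T.Nonempty := fun hT => hS ⟨_, hTS _ hT.some_mem 1 one_pos⟩
    rw [Set.not_nonempty_iff_eq_empty.1 hS, Set.not_nonempty_iff_eq_empty.1 hT]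

lemma Real.limsup_eq_neg_liminf_neg (f : ℕ → ℝ) :
    limsup f atTop = - liminf (fun n => - f n) atTop := by
  rw [limsup_eq, liminf_eq, Real.sInf_def]
  congr 2
  ext a
  simp [le_neg]

/-- Real `limsup`s of asymptotically equal sequences agree, even when unbounded. -/
lemma limsup_eq_of_tendsto_sub {f g : ℕ → ℝ} (h : Tendsto (fun n => f n - g n) atTop (𝓝 0)) :
    limsup f atTop = limsup g atTop := by
  rw [Real.limsup_eq_neg_liminf_neg, Real.limsup_eq_neg_liminf_neg,
    liminf_eq_of_tendsto_sub (f := fun n => - f n) (g := fun n => - g n)]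
  simpa [sub_eq_add_neg, add_comm] using h.neg

lemma ae_tendsto_of_summable_variance {Ω : Type*} [MeasurableSpace Ω] {μ : Measure Ω}
    [IsProbabilityMeasure μ] {Y : ℕ → Ω → ℝ} (hY : ∀ k, MemLp (Y k) 2 μ)
    (h : Summable fun k => ProbabilityTheory.variance (Y k) μ) :
    ∀ᵐ ω ∂μ, Tendsto (fun k => Y k ω - ∫ x, Y k x ∂μ) atTop (𝓝 0) := by
  have hm : ∀ k, AEMeasurable (fun ω => ENNReal.ofReal ((Y k ω - ∫ x, Y k x ∂μ) ^ 2)) μ :=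
    fun k => (((hY k).1.aemeasurable.sub_const _).pow_const 2).ennreal_ofReal
  have hfin : ∫⁻ ω, ∑' k, ENNReal.ofReal ((Y k ω - ∫ x, Y k x ∂μ) ^ 2) ∂μ ≠ ⊤ := by
    rw [lintegral_tsum hm]
    simp_rw [← ProbabilityTheory.evariance_eq_lintegral_ofReal,
      ← ProbabilityTheory.ofReal_variance (hY _)]
    exact h.tsum_ofReal_ne_top
  filter_upwards [ae_lt_top' (AEMeasurable.tsum hm) hfin] with ω hω
  have h1 := ENNReal.tendsto_atTop_zero_of_tsum_ne_top hω.ne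
  have h2 := (ENNReal.tendsto_toReal ENNReal.zero_ne_top).comp h1
  simp only [Function.comp_def, ENNReal.toReal_ofReal (sq_nonneg _), ENNReal.toReal_zero] at h2
  have h3 := (Real.continuous_sqrt.tendsto _).comp h2
  simp only [Function.comp_def, Real.sqrt_sq_eq_abs, Real.sqrt_zero] at h3
  exact (tendsto_zero_iff_abs_tendsto_zero _).2 h3

/-- A sequence growing at most like `n ^ (1/4)` has negligible sums between consecutive squares. -/
lemma tendsto_sum_Ico_sq_div_sq {a : ℕ → ℝ} {C : ℝ} (ha0 : ∀ j, 0 ≤ a j)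
    (ha : ∀ j : ℕ, a j ≤ C * ((j : ℝ) + 1) ^ (1 / 4 : ℝ)) :
    Tendsto (fun k : ℕ => (∑ j ∈ Finset.Ico (k ^ 2) ((k + 1) ^ 2), a j) / (k : ℝ) ^ 2)
      atTop (𝓝 0) := by
  have hC : 0 ≤ C := by
    have := (ha0 0).trans (ha 0)
    simpa using this
  have hlim : Tendsto (fun k : ℕ => 6 * C * (k : ℝ) ^ (-(1 / 2 : ℝ))) atTop (𝓝 0) := by
    simpa using ((tendsto_rpow_neg_atTop (by norm_num : (0 : ℝ) < 1 / 2)).comp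
      tendsto_natCast_atTop_atTop).const_mul (6 * C)
  refine squeeze_zero' (Eventually.of_forall fun k => ?_) ?_ hlim
  · exact div_nonneg (Finset.sum_nonneg fun j _ => ha0 j) (by positivity)
  filter_upwards [eventually_ge_atTop 1] with k hk
  have hk1 : (1 : ℝ) ≤ k := by exact_mod_cast hk
  have hk0 : (0 : ℝ) < k := by linarith
  have hterm : ∀ j ∈ Finset.Ico (k ^ 2) ((k + 1) ^ 2), a j ≤ 2 * C * (k : ℝ) ^ (1 / 2 : ℝ) := by
    intro j hj
    have hj' : ((j : ℝ) + 1) ≤ ((k : ℝ) + 1) ^ 2 := by exact_mod_cast (Finset.mem_Ico.1 hj).2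
    have : ((j : ℝ) + 1) ^ (1 / 4 : ℝ) ≤ 2 * (k : ℝ) ^ (1 / 2 : ℝ) := by
      calc ((j : ℝ) + 1) ^ (1 / 4 : ℝ) ≤ (16 * (k : ℝ) ^ 2) ^ (1 / 4 : ℝ) := by
            gcongr
            nlinarith
        _ = 2 * (k : ℝ) ^ (1 / 2 : ℝ) := by
            rw [Real.mul_rpow (by norm_num) (by positivity), ← Real.rpow_natCast,
              ← Real.rpow_mul hk0.le, show (16 : ℝ) = 2 ^ (4 : ℝ) by norm_num,
              ← Real.rpow_mul (by norm_num)]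
            norm_num
    calc a j ≤ C * ((j : ℝ) + 1) ^ (1 / 4 : ℝ) := ha j
      _ ≤ C * (2 * (k : ℝ) ^ (1 / 2 : ℝ)) := by gcongr
      _ = _ := by ring
  have hsum := Finset.sum_le_card_nsmul _ _ _ hterm
  rw [Nat.card_Ico, show (k + 1) ^ 2 - k ^ 2 = 2 * k + 1 by
    rw [Nat.sub_eq_iff_eq_add (by gcongr; omega)]; ring, nsmul_eq_mul] at hsum
  rw [div_le_iff₀ (by positivity)]
  have hpow : (k : ℝ) ^ (-(1 / 2 : ℝ)) * (k : ℝ) ^ 2 = k * (k : ℝ) ^ (1 / 2 : ℝ) := by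
    nth_rw 3 [← Real.rpow_one (k : ℝ)]
    rw [← Real.rpow_natCast, ← Real.rpow_add hk0, ← Real.rpow_add hk0]
    norm_num
  have hR : 0 ≤ C * (k : ℝ) ^ (1 / 2 : ℝ) := by positivity
  calc _ ≤ _ := hsum
    _ ≤ (3 * k) * (2 * C * (k : ℝ) ^ (1 / 2 : ℝ)) := by
        gcongr
        push_cast
        linarith
    _ = 6 * C * (k * (k : ℝ) ^ (1 / 2 : ℝ)) := by ring
    _ = _ := by rw [← hpow]; ring

/-- Convergence of averages along squares implies convergence of averages, for nonnegative
sequences with slowly growing centering. -/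
lemma tendsto_average_of_tendsto_average_sq {x a : ℕ → ℝ} {C : ℝ} (hx : ∀ j, 0 ≤ x j)
    (ha0 : ∀ j, 0 ≤ a j) (ha : ∀ j : ℕ, a j ≤ C * ((j : ℝ) + 1) ^ (1 / 4 : ℝ))
    (h : Tendsto (fun k : ℕ => (∑ j ∈ Finset.range (k ^ 2), (x j - a j)) / (k : ℝ) ^ 2)
      atTop (𝓝 0)) :
    Tendsto (fun n : ℕ => (∑ j ∈ Finset.range n, (x j - a j)) / (n : ℝ)) atTop (𝓝 0) := by
  set t : ℕ → ℝ := fun k => (∑ j ∈ Finset.range (k ^ 2), (x j - a j)) / (k : ℝ) ^ 2 with ht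
  set gap : ℕ → ℝ := fun k => ∑ j ∈ Finset.Ico (k ^ 2) ((k + 1) ^ 2), a j with hgap
  have hlim : Tendsto (fun k : ℕ => |t k| + 4 * |t (k + 1)| + gap k / (k : ℝ) ^ 2)
      atTop (𝓝 0) := by
    have h2 := h.comp (tendsto_add_atTop_nat 1)
    simpa using (h.abs.add (h2.abs.const_mul 4)).add (tendsto_sum_Ico_sq_div_sq ha0 ha)
  have hsqrt : Tendsto Nat.sqrt atTop atTop :=
    tendsto_atTop_atTop.2 fun b => ⟨b ^ 2, fun n hn => Nat.le_sqrt'.2 hn⟩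
  refine squeeze_zero_norm' ?_ (hlim.comp hsqrt)
  filter_upwards [eventually_ge_atTop 1] with n hn
  simp only [Function.comp]
  set k := Nat.sqrt n with hk
  have hk1 : 1 ≤ k := Nat.le_sqrt'.2 (by simpa using hn)
  have hkn : k ^ 2 ≤ n := Nat.sqrt_le' n
  have hnk : n ≤ (k + 1) ^ 2 := (Nat.lt_succ_sqrt' n).le
  have mono : ∀ {y : ℕ → ℝ}, (∀ j, 0 ≤ y j) → ∀ {p q : ℕ}, p ≤ q →
      ∑ j ∈ Finset.range p, y j ≤ ∑ j ∈ Finset.range q, y j := fun hy p q hpq =>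
    Finset.sum_le_sum_of_subset_of_nonneg (by simpa using hpq) fun j _ _ => hy j
  have g : gap k = ∑ j ∈ Finset.range ((k + 1) ^ 2), a j - ∑ j ∈ Finset.range (k ^ 2), a j :=
    Finset.sum_Ico_eq_sub _ (hkn.trans hnk)
  have hk0 : (1 : ℝ) ≤ k := by exact_mod_cast hk1
  have hknR : (k : ℝ) ^ 2 ≤ n := by exact_mod_cast hkn
  have t1 : ∑ j ∈ Finset.range (k ^ 2), (x j - a j) = t k * (k : ℝ) ^ 2 := by
    rw [ht]; field_simp
  have t2 : ∑ j ∈ Finset.range ((k + 1) ^ 2), (x j - a j) = t (k + 1) * ((k : ℝ) + 1) ^ 2 := by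
    rw [ht]; push_cast; field_simp
  have hg0 : 0 ≤ gap k := Finset.sum_nonneg fun j _ => ha0 j
  have habs : |∑ j ∈ Finset.range n, (x j - a j)| ≤
      |t k| * (k : ℝ) ^ 2 + |t (k + 1)| * ((k : ℝ) + 1) ^ 2 + gap k := by
    have e1 := le_abs_self (t (k + 1) * ((k : ℝ) + 1) ^ 2)
    have e2 := neg_abs_le (t k * (k : ℝ) ^ 2)
    rw [abs_mul, abs_of_nonneg (by positivity : 0 ≤ ((k : ℝ) + 1) ^ 2)] at e1
    rw [abs_mul, abs_of_nonneg (by positivity : 0 ≤ (k : ℝ) ^ 2)] at e2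
    have p1 : 0 ≤ |t k| * (k : ℝ) ^ 2 := by positivity
    have p2 : 0 ≤ |t (k + 1)| * ((k : ℝ) + 1) ^ 2 := by positivity
    rw [Finset.sum_sub_distrib] at t1 t2 ⊢
    have m1 := mono hx hkn
    have m2 := mono hx hnk
    have m3 := mono ha0 hkn
    have m4 := mono ha0 hnk
    rw [abs_le]
    constructor <;> linarith
  rw [Real.norm_eq_abs, abs_div, abs_of_nonneg (Nat.cast_nonneg n : (0 : ℝ) ≤ n)]
  calc _ ≤ (|t k| * (k : ℝ) ^ 2 + |t (k + 1)| * ((k : ℝ) + 1) ^ 2 + gap k) / (k : ℝ) ^ 2 := by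
        gcongr
    _ ≤ (|t k| * (k : ℝ) ^ 2 + |t (k + 1)| * (4 * (k : ℝ) ^ 2) + gap k) / (k : ℝ) ^ 2 := by
        gcongr
        nlinarith
    _ = _ := by field_simp

/-- A strong law of large numbers for nonnegative pairwise independent variables whose second
moments grow at most like `n ^ (1/4)`. -/
theorem strong_law_of_integral_sq_le {Ω : Type*} [MeasurableSpace Ω] {μ : Measure Ω}
    [IsProbabilityMeasure μ] {X : ℕ → Ω → ℝ} {B : ℝ} (hX : ∀ j, MemLp (X j) 2 μ)
    (hnn : ∀ j ω, 0 ≤ X j ω)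
    (hind : Pairwise fun i j => ProbabilityTheory.IndepFun (X i) (X j) μ)
    (hmean : ∀ j : ℕ, ∫ ω, X j ω ∂μ ≤ B * ((j : ℝ) + 1) ^ (1 / 4 : ℝ))
    (hsq : ∀ j : ℕ, ∫ ω, X j ω ^ 2 ∂μ ≤ B * ((j : ℝ) + 1) ^ (1 / 4 : ℝ)) :
    ∀ᵐ ω ∂μ, Tendsto (fun n : ℕ =>
      (∑ j ∈ Finset.range n, (X j ω - ∫ x, X j x ∂μ)) / (n : ℝ)) atTop (𝓝 0) := by
  have hB : 0 ≤ B := by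
    have := (integral_nonneg fun ω => sq_nonneg (X 0 ω)).trans (hsq 0)
    simpa using this
  set Y : ℕ → Ω → ℝ := fun k => ((k : ℝ) ^ 2)⁻¹ • ∑ j ∈ Finset.range (k ^ 2), X j with hYdef
  have hS : ∀ n, MemLp (∑ j ∈ Finset.range n, X j) 2 μ := fun n =>
    memLp_finsetSum' _ fun j _ => hX j
  have hY : ∀ k, MemLp (Y k) 2 μ := fun k => (hS _).const_smul _
  have hvar : Summable fun k => ProbabilityTheory.variance (Y k) μ := by
    refine Summable.of_nonneg_of_le (fun k => ProbabilityTheory.variance_nonneg _ _) (fun k => ?_)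
      ((Real.summable_nat_rpow.2 (by norm_num : -(3 / 2 : ℝ) < -1)).mul_left B)
    rw [hYdef, ProbabilityTheory.variance_smul,
      ProbabilityTheory.IndepFun.variance_sum (fun i _ => hX i) (fun i _ j _ hij => hind hij)]
    rcases Nat.eq_zero_or_pos k with rfl | hk
    · simp
    have hk0 : (0 : ℝ) < k := by exact_mod_cast hk
    have hterm : ∀ j ∈ Finset.range (k ^ 2),
        ProbabilityTheory.variance (X j) μ ≤ B * (k : ℝ) ^ (1 / 2 : ℝ) := by
      intro j hj
      have hj' : (j : ℝ) + 1 ≤ (k : ℝ) ^ 2 := by exact_mod_cast Finset.mem_range.1 hj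
      calc _ ≤ _ := ProbabilityTheory.variance_le_expectation_sq (hX j).1
        _ ≤ B * ((j : ℝ) + 1) ^ (1 / 4 : ℝ) := hsq j
        _ ≤ B * ((k : ℝ) ^ 2) ^ (1 / 4 : ℝ) := by gcongr
        _ = _ := by
          rw [← Real.rpow_natCast, ← Real.rpow_mul hk0.le]
          norm_num
    have hsum := Finset.sum_le_card_nsmul _ _ _ hterm
    rw [Finset.card_range, nsmul_eq_mul] at hsum
    calc _ ≤ ((k : ℝ) ^ 2)⁻¹ ^ 2 * (((k ^ 2 : ℕ) : ℝ) * (B * (k : ℝ) ^ (1 / 2 : ℝ))) := by gcongr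
      _ = B * ((k : ℝ) ^ (1 / 2 : ℝ) * ((k : ℝ) ^ 2)⁻¹) := by
        push_cast
        field_simp
      _ = _ := by
        rw [← Real.rpow_natCast, ← Real.rpow_neg hk0.le, ← Real.rpow_add hk0]
        norm_num
  filter_upwards [ae_tendsto_of_summable_variance hY hvar] with ω hω
  refine tendsto_average_of_tendsto_average_sq (C := B) (fun j => hnn j ω)
    (fun j => integral_nonneg (hnn j)) hmean ?_
  convert hω using 2 with k
  have : ∫ x, Y k x ∂μ = ((k : ℝ) ^ 2)⁻¹ * ∑ j ∈ Finset.range (k ^ 2), ∫ x, X j x ∂μ := by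
    simp only [hYdef, Pi.smul_apply, Finset.sum_apply, smul_eq_mul]
    rw [integral_const_mul, integral_finsetSum _ fun j _ => (hX j).integrable one_le_two]
  rw [this, Finset.sum_sub_distrib]
  simp only [hYdef, Pi.smul_apply, Finset.sum_apply, smul_eq_mul]
  ring

lemma tendsto_shift_div {u : ℕ → ℝ} (h : Tendsto (fun n : ℕ => u n / (n : ℝ)) atTop (𝓝 0))
    (K : ℕ) : Tendsto (fun n : ℕ => u (n + K) / (n : ℝ)) atTop (𝓝 0) := by
  have h1 := h.comp (tendsto_add_atTop_nat K)
  have h2 : Tendsto (fun n : ℕ => 1 + (K : ℝ) / (n : ℝ)) atTop (𝓝 (1 + 0)) :=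
    (tendsto_const_div_atTop_nhds_zero_nat (K : ℝ)).const_add 1
  have h3 := h1.mul h2
  rw [zero_mul] at h3
  refine h3.congr' ?_
  filter_upwards [eventually_ge_atTop 1] with n hn
  have hn0 : (0 : ℝ) < n := by exact_mod_cast hn
  have : (0 : ℝ) < (n : ℝ) + K := by positivity
  simp only [Function.comp, Nat.cast_add]
  field_simp

lemma tendsto_div_of_le_rpow {a : ℕ → ℝ} {B : ℝ} (ha0 : ∀ j, 0 ≤ a j)
    (ha : ∀ j : ℕ, a j ≤ B * ((j : ℝ) + 1) ^ (1 / 4 : ℝ)) :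
    Tendsto (fun n : ℕ => a n / (n : ℝ)) atTop (𝓝 0) := by
  have hlim : Tendsto (fun k : ℕ => 2 * B * (k : ℝ) ^ (-(3 / 4 : ℝ))) atTop (𝓝 0) := by
    simpa using ((tendsto_rpow_neg_atTop (by norm_num : (0 : ℝ) < 3 / 4)).comp
      tendsto_natCast_atTop_atTop).const_mul (2 * B)
  have hB : 0 ≤ B := by simpa using (ha0 0).trans (ha 0)
  refine squeeze_zero' (Eventually.of_forall fun k => div_nonneg (ha0 k) (by positivity)) ?_ hlim
  filter_upwards [eventually_ge_atTop 1] with n hn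
  have hn1 : (1 : ℝ) ≤ n := by exact_mod_cast hn
  have hn0 : (0 : ℝ) < n := by linarith
  rw [div_le_iff₀ hn0]
  have hpow : (n : ℝ) ^ (-(3 / 4 : ℝ)) * n = (n : ℝ) ^ (1 / 4 : ℝ) := by
    nth_rw 2 [← Real.rpow_one (n : ℝ)]
    rw [← Real.rpow_add hn0]
    norm_num
  calc a n ≤ B * ((n : ℝ) + 1) ^ (1 / 4 : ℝ) := ha n
    _ ≤ B * (16 * (n : ℝ)) ^ (1 / 4 : ℝ) := by gcongr; linarith
    _ = 2 * B * (n : ℝ) ^ (1 / 4 : ℝ) := by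
      rw [Real.mul_rpow (by norm_num) hn0.le, show (16 : ℝ) = 2 ^ (4 : ℝ) by norm_num,
        ← Real.rpow_mul (by norm_num)]
      norm_num
      ring
    _ = _ := by rw [mul_assoc, mul_assoc, mul_assoc, hpow]

/-- If the centered averages vanish, so do those with a fixed shift of the uncentered part. -/
lemma tendsto_shifted_average {x a : ℕ → ℝ} {B : ℝ} (ha0 : ∀ j, 0 ≤ a j)
    (ha : ∀ j : ℕ, a j ≤ B * ((j : ℝ) + 1) ^ (1 / 4 : ℝ))
    (h : Tendsto (fun n : ℕ => (∑ j ∈ Finset.range n, (x j - a j)) / (n : ℝ)) atTop (𝓝 0))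
    (K : ℕ) :
    Tendsto (fun n : ℕ => 1 / (n : ℝ) * ∑ j ∈ Finset.range (n + K), x j -
      1 / (n : ℝ) * ∑ j ∈ Finset.range n, a j) atTop (𝓝 0) := by
  have h1 := tendsto_shift_div (u := fun n => ∑ j ∈ Finset.range n, (x j - a j)) h K
  have h2 : Tendsto (fun n : ℕ => ∑ i ∈ Finset.range K, a (n + i) / (n : ℝ)) atTop
      (𝓝 (∑ i ∈ Finset.range K, 0)) :=
    tendsto_finsetSum _ fun i _ => tendsto_shift_div (tendsto_div_of_le_rpow ha0 ha) i
  have h3 := h1.add h2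
  simp only [Finset.sum_const_zero, add_zero] at h3
  refine h3.congr fun n => ?_
  rw [Finset.sum_sub_distrib, ← Finset.sum_div, Finset.sum_range_add a]
  ring

lemma mul_sq_log_le {q M : ℝ} (hq : 0 < q) (hq1 : q ≤ 1) (hM : 1 ≤ M) :
    q * (-Real.log q) ^ 2 ≤ 256 * M ^ (1 / 4 : ℝ) * q + 16 / M := by
  have hM0 : 0 < M := by linarith
  have hl : 0 ≤ -Real.log q := neg_nonneg.2 (Real.log_nonpos hq.le hq1)
  rcases le_total (M ^ 2)⁻¹ q with h | h
  · have h1 : -Real.log q ≤ 16 * M ^ (1 / 8 : ℝ) := by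
      have e := Real.log_le_log (by positivity) h
      rw [Real.log_inv, Real.log_pow] at e
      have := Real.log_le_rpow_div hM0.le (by norm_num : (0 : ℝ) < 1 / 8)
      push_cast at e
      linarith
    have h2 : (-Real.log q) ^ 2 ≤ 256 * M ^ (1 / 4 : ℝ) := by
      calc _ ≤ (16 * M ^ (1 / 8 : ℝ)) ^ 2 := by gcongr
        _ = _ := by
          rw [mul_pow, ← Real.rpow_natCast (M ^ (1 / 8 : ℝ)), ← Real.rpow_mul hM0.le]
          norm_num
    have : 0 ≤ 16 / M := by positivity
    nlinarith
  · set s := √√q with hs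
    have hs0 : 0 < s := by positivity
    have hs2 : s ^ 2 = √q := Real.sq_sqrt (by positivity)
    have hs4 : s ^ 4 = q := by
      rw [show s ^ 4 = (s ^ 2) ^ 2 by ring, hs2, Real.sq_sqrt hq.le]
    have h1 : -Real.log q ≤ 4 / s := by
      rw [← hs4, Real.log_pow]
      have := Real.log_le_sub_one_of_pos (inv_pos.2 hs0)
      rw [Real.log_inv] at this
      rw [div_eq_mul_inv]
      push_cast
      linarith
    have h2 : s ^ 2 ≤ 1 / M := by
      rw [hs2, Real.sqrt_le_left (by positivity)]
      simpa using h
    have h3 : q * (-Real.log q) ^ 2 ≤ 16 / M := by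
      calc _ ≤ q * (4 / s) ^ 2 := by gcongr
        _ = 16 * s ^ 2 := by rw [← hs4]; field_simp; norm_num
        _ ≤ 16 * (1 / M) := by gcongr
        _ = _ := by ring
    have : 0 ≤ 256 * M ^ (1 / 4 : ℝ) * q := by positivity
    linarith

section ProbabilityVector

variable {M : ℕ} {q : Fin M → ℝ}

lemma probVector_le_one (hq : ∀ i, 0 < q i) (hs : ∑ i, q i = 1) (i : Fin M) : q i ≤ 1 :=
  hs ▸ Finset.single_le_sum (fun j _ => (hq j).le) (Finset.mem_univ i)

lemma one_le_natCast_of_probVector (hs : ∑ i, q i = 1) : (1 : ℝ) ≤ M := by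
  rcases Nat.eq_zero_or_pos M with rfl | h
  · simp at hs
  · exact_mod_cast h

/-- The second moment of the information function is sublinear in the alphabet size. -/
lemma sum_mul_sq_log_le (hq : ∀ i, 0 < q i) (hs : ∑ i, q i = 1) :
    ∑ i, q i * (-Real.log (q i)) ^ 2 ≤ 272 * (M : ℝ) ^ (1 / 4 : ℝ) := by
  have hM := one_le_natCast_of_probVector hs
  have h1 := Real.one_le_rpow hM (by norm_num : (0 : ℝ) ≤ 1 / 4)
  calc _ ≤ ∑ i, (256 * (M : ℝ) ^ (1 / 4 : ℝ) * q i + 16 / M) :=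
        Finset.sum_le_sum fun i _ => mul_sq_log_le (hq i) (probVector_le_one hq hs i) hM
    _ = 256 * (M : ℝ) ^ (1 / 4 : ℝ) + 16 := by
        rw [Finset.sum_add_distrib, ← Finset.mul_sum, hs, Finset.sum_const, Finset.card_univ,
          Fintype.card_fin, nsmul_eq_mul]
        field_simp
    _ ≤ _ := by linarith

lemma sum_mul_neg_log_le (hq : ∀ i, 0 < q i) (hs : ∑ i, q i = 1) :
    ∑ i, q i * -Real.log (q i) ≤ 273 * (M : ℝ) ^ (1 / 4 : ℝ) := by
  have h1 := Real.one_le_rpow (one_le_natCast_of_probVector hs) (by norm_num : (0 : ℝ) ≤ 1 / 4)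
  calc _ ≤ ∑ i, (q i + q i * (-Real.log (q i)) ^ 2) := Finset.sum_le_sum fun i _ => by
        nlinarith [hq i, mul_nonneg (hq i).le (sq_nonneg (-Real.log (q i) - 1 / 2))]
    _ ≤ _ := by
        rw [Finset.sum_add_distrib, hs]
        linarith [sum_mul_sq_log_le hq hs]

/-- The measure on a finite alphabet with a given probability vector. -/
noncomputable def probVectorPMF (hq : ∀ i, 0 < q i) (hs : ∑ i, q i = 1) : PMF (Fin M) :=
  PMF.ofFintype (fun i => ENNReal.ofReal (q i)) <| by
    rw [← ENNReal.ofReal_sum_of_nonneg fun i _ => (hq i).le, hs, ENNReal.ofReal_one]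

lemma integral_probVectorPMF (hq : ∀ i, 0 < q i) (hs : ∑ i, q i = 1) (f : Fin M → ℝ) :
    ∫ i, f i ∂(probVectorPMF hq hs).toMeasure = ∑ i, q i * f i := by
  rw [PMF.integral_eq_sum]
  simp [probVectorPMF, ENNReal.toReal_ofReal (hq _).le]

end ProbabilityVector

/-- A measure with Bernoulli cylinder values is the infinite product measure. -/
lemma eq_infinitePi_of_cylinder {m : ℕ → ℕ} {p : ∀ j : ℕ, Fin (m j) → ℝ}
    (hp : ∀ j i, 0 < p j i) (hsum : ∀ j, ∑ i, p j i = 1) {μ : Measure (∀ j : ℕ, Fin (m j))}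
    (hμ : ∀ (n : ℕ) (u : ∀ j : Fin n, Fin (m j)),
      μ {ω | ∀ j : Fin n, ω j = u j} = ∏ j : Fin n, ENNReal.ofReal (p j (u j))) :
    μ = Measure.infinitePi fun j => (probVectorPMF (hp j) (hsum j)).toMeasure := by
  have hlim : IsProjectiveLimit μ fun I : Finset ℕ =>
      Measure.pi fun i : I => (probVectorPMF (hp i) (hsum i)).toMeasure := by
    refine (isProjectiveLimit_nat_iff
      (isProjectiveMeasureFamily_pi
        fun j => (probVectorPMF (hp j) (hsum j)).toMeasure) μ).2
      fun n => Measure.ext_of_singleton fun v => ?_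
    rw [Measure.map_apply (by fun_prop) (measurableSet_singleton v), Measure.pi_singleton]
    have hmem : ∀ j : Fin (n + 1), (j : ℕ) ∈ Finset.Iic n := fun j =>
      Finset.mem_Iic.2 (Nat.lt_succ_iff.1 j.2)
    have hset : Preorder.frestrictLe (π := fun j => Fin (m j)) n ⁻¹' {v} =
        {ω : ∀ j : ℕ, Fin (m j) | ∀ j : Fin (n + 1), ω j = v ⟨j, hmem j⟩} := by
      ext ω
      simp only [Set.mem_preimage, Set.mem_singleton_iff, Set.mem_ofPred_eq, funext_iff]
      exact ⟨fun h j => h ⟨j, hmem j⟩,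
        fun h i => h ⟨i, Nat.lt_succ_iff.2 (Finset.mem_Iic.1 i.2)⟩⟩
    rw [hset, hμ (n + 1) fun j => v ⟨j, hmem j⟩]
    refine Fintype.prod_equiv
      ⟨fun j => ⟨j, hmem j⟩, fun i => ⟨i, Nat.lt_succ_iff.2 (Finset.mem_Iic.1 i.2)⟩,
        fun _ => rfl, fun _ => rfl⟩ _ _ fun j => ?_
    rw [PMF.toMeasure_apply_singleton _ _ (measurableSet_singleton _)]
    simp [probVectorPMF]
  exact hlim.unique (Measure.isProjectiveLimit_infinitePi _)

lemma exists_le_mul_add_one_of_tendsto {m : ℕ → ℕ} {α L : ℝ} (hα : 0 < α) (hL : L < 1)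
    (h : Tendsto (fun n : ℕ => (m n : ℝ) / (n : ℝ) ^ ((1 : ℝ) - α)) atTop (𝓝 L)) :
    ∃ C : ℝ, 0 ≤ C ∧ ∀ n : ℕ, (m n : ℝ) ≤ C * ((n : ℝ) + 1) := by
  obtain ⟨N, hN⟩ := eventually_atTop.1
    ((h.eventually (gt_mem_nhds hL)).and (eventually_ge_atTop 1))
  have hS : (0 : ℝ) ≤ ∑ j ∈ Finset.range N, (m j : ℝ) := by positivity
  refine ⟨1 + ∑ j ∈ Finset.range N, (m j : ℝ), by positivity, fun n => ?_⟩
  have hn0 : (0 : ℝ) ≤ n := n.cast_nonneg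
  rcases lt_or_ge n N with hn | hn
  · have := Finset.single_le_sum (f := fun j => (m j : ℝ)) (fun j _ => Nat.cast_nonneg _)
      (Finset.mem_range.2 hn)
    nlinarith
  · obtain ⟨h1, h2⟩ := hN n hn
    have hn1 : (1 : ℝ) ≤ n := by exact_mod_cast h2
    rw [div_lt_one (Real.rpow_pos_of_pos (by linarith) _)] at h1
    have h3 : (n : ℝ) ^ (1 - α) ≤ (n : ℝ) ^ (1 : ℝ) :=
      Real.rpow_le_rpow_of_exponent_le hn1 (by linarith)
    rw [Real.rpow_one] at h3
    nlinarith

lemma neg_log_measure_cylinder {m : ℕ → ℕ} {p : ∀ j : ℕ, Fin (m j) → ℝ}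
    (hp : ∀ j i, 0 < p j i) {μ : Measure (∀ j : ℕ, Fin (m j))}
    (hμ : ∀ (n : ℕ) (u : ∀ j : Fin n, Fin (m j)),
      μ {ω | ∀ j : Fin n, ω j = u j} = ∏ j : Fin n, ENNReal.ofReal (p j (u j)))
    (ω : ∀ j : ℕ, Fin (m j)) (N : ℕ) :
    -Real.log (μ {ϑ | ∀ j < N, ϑ j = ω j}).toReal =
      ∑ j ∈ Finset.range N, -Real.log (p j (ω j)) := by
  have hset : {ϑ : ∀ j : ℕ, Fin (m j) | ∀ j < N, ϑ j = ω j} =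
      {ϑ | ∀ j : Fin N, ϑ j = ω j} := by
    ext ϑ
    exact ⟨fun h j => h j j.2, fun h j hj => h ⟨j, hj⟩⟩
  rw [hset, hμ N fun j => ω j, ENNReal.toReal_prod, Real.log_prod, Finset.sum_neg_distrib,
    Finset.sum_range]
  · simp [ENNReal.toReal_ofReal (hp _ _).le]
  · intro j _
    rw [ENNReal.toReal_ofReal (hp _ _).le]
    exact (hp _ _).ne'

/-- The strong law for the information functions of a nonautonomous Bernoulli measure. -/
lemma ae_tendsto_average_information {m : ℕ → ℕ} {p : ∀ j : ℕ, Fin (m j) → ℝ} {B : ℝ}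
    (hp : ∀ j i, 0 < p j i) (hsum : ∀ j, ∑ i, p j i = 1)
    (hB : ∀ j : ℕ, 273 * (m j : ℝ) ^ (1 / 4 : ℝ) ≤ B * ((j : ℝ) + 1) ^ (1 / 4 : ℝ)) :
    ∀ᵐ ω ∂(Measure.infinitePi fun j => (probVectorPMF (hp j) (hsum j)).toMeasure),
      Tendsto (fun n : ℕ => (∑ j ∈ Finset.range n,
        (-Real.log (p j (ω j)) - ∑ i, p j i * -Real.log (p j i))) / (n : ℝ)) atTop (𝓝 0) := by
  set ν : ∀ j, Measure (Fin (m j)) := fun j => (probVectorPMF (hp j) (hsum j)).toMeasure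
  have hint : ∀ j (f : Fin (m j) → ℝ),
      ∫ ω, f (ω j) ∂(Measure.infinitePi ν) = ∑ i, p j i * f i := by
    intro j f
    rw [← integral_probVectorPMF (hp j) (hsum j), show (probVectorPMF (hp j) (hsum j)).toMeasure =
        (Measure.infinitePi ν).map fun x => x j from (Measure.infinitePi_map_eval ν j).symm,
      integral_map (measurable_pi_apply j).aemeasurable .of_discrete]
  have hind := ProbabilityTheory.iIndepFun_infinitePi (P := ν)
    (X := fun j i => -Real.log (p j i)) fun _ => .of_discrete
  have hlaw := strong_law_of_integral_sq_le (μ := Measure.infinitePi ν) (B := B)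
    (X := fun j ω => -Real.log (p j (ω j)))
    (fun j => (MemLp.of_discrete (μ := ν j) (f := fun i => -Real.log (p j i))
      ).comp_measurePreserving
      (measurePreserving_eval_infinitePi ν j))
    (fun j ω => neg_nonneg.2 (Real.log_nonpos (hp j _).le (probVector_le_one (hp j) (hsum j) _)))
    (fun i j hij => hind.indepFun hij)
    (fun j => by
      rw [hint j fun i => -Real.log (p j i)]
      exact (sum_mul_neg_log_le (hp j) (hsum j)).trans (hB j))
    (fun j => by
      rw [hint j fun i => (-Real.log (p j i)) ^ 2]
      refine ((sum_mul_sq_log_le (hp j) (hsum j)).trans ?_).trans (hB j)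
      gcongr
      norm_num)
  simpa only [hint _ fun i => -Real.log (p _ i)] using hlaw

/-- Let `μ` be the nonautonomous Bernoulli measure on `Σ_0^∞(m)` generated by positive
probability vectors `p_j`, and suppose `lim_n m_n / n^{1-α} < 1` for some `α > 0`.
Then for `μ`-a.e. `ω`, the lower local entropy (the `ε → 0⁺` limit of
`liminf_n -(1/n) log μ([ω|(n+⌊-log ε⌋)])`) equals `liminf_n (1/n) ∑_{j<n} H(p_j)`,
and the upper local entropy equals the corresponding `limsup`, where
`H(p_j) = -∑_i p_{j,i} log p_{j,i}`. -/
theorem stmt7 (m : ℕ → ℕ) (hm : ∀ k, 2 ≤ m k)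
    (p : ∀ j : ℕ, Fin (m j) → ℝ) (hp : ∀ j i, 0 < p j i) (hsum : ∀ j, ∑ i, p j i = 1)
    (μ : Measure (∀ j : ℕ, Fin (m j)))
    (hμ : ∀ (n : ℕ) (u : ∀ j : Fin n, Fin (m j)),
      μ {ω | ∀ j : Fin n, ω j = u j} = ∏ j : Fin n, ENNReal.ofReal (p j (u j)))
    (hα : ∃ α : ℝ, 0 < α ∧ ∃ L : ℝ, L < 1 ∧
      Tendsto (fun n : ℕ => (m n : ℝ) / (n : ℝ) ^ ((1 : ℝ) - α)) atTop (nhds L)) :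
    ∀ᵐ ω ∂μ,
      Tendsto (fun ε : ℝ =>
          liminf (fun n : ℕ => -(1 / (n : ℝ)) *
            Real.log ((μ {ϑ | ∀ j < n + (⌊-Real.log ε⌋).toNat, ϑ j = ω j}).toReal)) atTop)
        (nhdsWithin 0 (Set.Ioi 0))
        (nhds (liminf (fun n : ℕ =>
          (1 / (n : ℝ)) * ∑ j ∈ Finset.range n, -∑ i, p j i * Real.log (p j i)) atTop)) ∧
      Tendsto (fun ε : ℝ =>
          limsup (fun n : ℕ => -(1 / (n : ℝ)) *
            Real.log ((μ {ϑ | ∀ j < n + (⌊-Real.log ε⌋).toNat, ϑ j = ω j}).toReal)) atTop)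
        (nhdsWithin 0 (Set.Ioi 0))
        (nhds (limsup (fun n : ℕ =>
          (1 / (n : ℝ)) * ∑ j ∈ Finset.range n, -∑ i, p j i * Real.log (p j i)) atTop)) := by
  obtain ⟨α, hα0, L, hL, hlim⟩ := hα
  obtain ⟨C, hC0, hC⟩ := exists_le_mul_add_one_of_tendsto hα0 hL hlim
  have hB : ∀ j : ℕ, 273 * (m j : ℝ) ^ (1 / 4 : ℝ) ≤
      273 * C ^ (1 / 4 : ℝ) * ((j : ℝ) + 1) ^ (1 / 4 : ℝ) := by
    intro j
    rw [mul_assoc, ← Real.mul_rpow hC0 (by positivity)]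
    gcongr
    exact hC j
  have hlaw := ae_tendsto_average_information hp hsum hB
  rw [← eq_infinitePi_of_cylinder hp hsum hμ] at hlaw
  filter_upwards [hlaw] with ω hω
  have hdiff : ∀ K : ℕ, Tendsto (fun n : ℕ =>
      -(1 / (n : ℝ)) * Real.log ((μ {ϑ | ∀ j < n + K, ϑ j = ω j}).toReal) -
      (1 / (n : ℝ)) * ∑ j ∈ Finset.range n, -∑ i, p j i * Real.log (p j i)) atTop (𝓝 0) := by
    intro K
    have h := tendsto_shifted_average
      (fun j => Finset.sum_nonneg fun i _ => mul_nonneg (hp j i).le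
        (neg_nonneg.2 (Real.log_nonpos (hp j i).le (probVector_le_one (hp j) (hsum j) i))))
      (fun j => (sum_mul_neg_log_le (hp j) (hsum j)).trans (hB j)) hω K
    refine h.congr fun n => ?_
    rw [← neg_log_measure_cylinder hp hμ ω (n + K)]
    simp only [mul_neg, neg_mul, Finset.sum_neg_distrib]
  constructor
  · simp only [liminf_eq_of_tendsto_sub (hdiff _)]
    exact tendsto_const_nhds
  · simp only [limsup_eq_of_tendsto_sub (hdiff _)]
    exact tendsto_const_nhds
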